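/- arXiv:1311.5256 — 2 statements merged into one kernel-verified Lean document; each statement's English description precedes it below -/
import Mathlib

section
/- An algebraic curvature operator R on ℝ⁴ is both NNIC₊ and NNIC₋ if and only if R has nonnegative isotropic curvature, i.e. ⟨Rω,ω⟩_h ≥ 0 for every ω ∈ Λ²ℂ⁴ of the form ω = v∧w with v,w ∈ ℂ⁴ spanning an isotropic 2-plane. -/
noncomputable section

open scoped ComplexConjugate

/-- `ℝ⁴` with its standard basis. -/
abbrev V4 := Fin 4 → ℝ
/-- `Λ²ℝ⁴` in the coordinates given by the basis
`e₁∧e₂, e₁∧e₃, e₁∧e₄, e₂∧e₃, e₂∧e₄, e₃∧e₄` (0-indexed). -/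
abbrev L6 := Fin 6 → ℝ
/-- Endomorphisms of `Λ²ℝ⁴`, as `6×6` matrices. -/
abbrev M6 := Fin 6 → Fin 6 → ℝ

/-- standard basis of ℝ⁴ -/
def std4 (i : Fin 4) : V4 := fun j => if j = i then 1 else 0

/-- the standard inner product of ℝ⁴ -/
def ip4 (x y : V4) : ℝ := ∑ i, x i * y i

/-- the index pairs for the basis of Λ²ℝ⁴ -/
def pr : Fin 6 → Fin 4 × Fin 4 := ![(0,1),(0,2),(0,3),(1,2),(1,3),(2,3)]

/-- the wedge product `x ∧ y` of two vectors, in coordinates.  With this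
coordinate expression, the standard inner product `ip6` below satisfies
`⟨x∧y, z∧t⟩ = ⟨x,z⟩⟨y,t⟩ − ⟨x,t⟩⟨y,z⟩`. -/
def wedge (x y : V4) : L6 := fun k => x (pr k).1 * y (pr k).2 - x (pr k).2 * y (pr k).1

/-- the inner product of Λ²ℝ⁴ -/
def ip6 (a b : L6) : ℝ := ∑ k, a k * b k

/-- The Hodge star operator on Λ²ℝ⁴. -/
def hodge (w : L6) : L6 := ![w 5, -(w 4), w 3, w 2, -(w 1), w 0]

/-- self-dual 2-forms (the +1 eigenspace Λ²₊ of the Hodge star) -/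
def SelfDual (w : L6) : Prop := hodge w = w
/-- anti-self-dual 2-forms (the −1 eigenspace Λ²₋ of the Hodge star) -/
def AntiSelfDual (w : L6) : Prop := hodge w = -w

/-- application of an endomorphism (matrix) of Λ²ℝ⁴ to a 2-form -/
def appM (A : M6) (w : L6) : L6 := fun k => ∑ l, A k l * w l

/-- symmetry of an endomorphism of Λ²ℝ⁴ w.r.t. the inner product -/
def IsSymm6 (A : M6) : Prop := ∀ a b : L6, ip6 (appM A a) b = ip6 a (appM A b)

/-- the first Bianchi identity -/
def Bianchi (A : M6) : Prop := ∀ x y z t : V4,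
  ip6 (appM A (wedge x y)) (wedge z t) + ip6 (appM A (wedge z x)) (wedge y t)
    + ip6 (appM A (wedge y z)) (wedge x t) = 0

/-- algebraic curvature operators on ℝ⁴ : symmetric endomorphisms of Λ²ℝ⁴
satisfying the first Bianchi identity.  The set of these is `S²_BΛ²ℝ⁴`. -/
def IsCurvOp (A : M6) : Prop := IsSymm6 A ∧ Bianchi A

/-- the scalar curvature: twice the trace -/
def scal (A : M6) : ℝ := 2 * ∑ k, A k k

/-- orthogonal projection P₊ of Λ²ℝ⁴ onto Λ²₊ -/
def pplus (w : L6) : L6 := (1/2 : ℝ) • (w + hodge w)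

/-- the self-dual Weyl part W₊ of a curvature operator, as a map on Λ²₊:
`W₊η = P₊(Rη) − (scal(R)/12)·η`. -/
def Wplus (A : M6) (η : L6) : L6 := pplus (appM A η) - (scal A / 12) • η

/-- `R` is PIC₊ : the quadratic form `η ↦ ⟨Rη,η⟩` on Λ²₊ is 2-positive. -/
def PICp (A : M6) : Prop := ∀ η ζ : L6, SelfDual η → SelfDual ζ →
  ip6 η η = 1 → ip6 ζ ζ = 1 → ip6 η ζ = 0 →
  0 < ip6 (appM A η) η + ip6 (appM A ζ) ζ

/-- `R` is NNIC₊ : the quadratic form `η ↦ ⟨Rη,η⟩` on Λ²₊ is 2-nonnegative. -/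
def NNICp (A : M6) : Prop := ∀ η ζ : L6, SelfDual η → SelfDual ζ →
  ip6 η η = 1 → ip6 ζ ζ = 1 → ip6 η ζ = 0 →
  0 ≤ ip6 (appM A η) η + ip6 (appM A ζ) ζ

/-- `R` is PIC₋ : the quadratic form `η ↦ ⟨Rη,η⟩` on Λ²₋ is 2-positive. -/
def PICm (A : M6) : Prop := ∀ η ζ : L6, AntiSelfDual η → AntiSelfDual ζ →
  ip6 η η = 1 → ip6 ζ ζ = 1 → ip6 η ζ = 0 →
  0 < ip6 (appM A η) η + ip6 (appM A ζ) ζ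

/-- `R` is NNIC₋ : the quadratic form `η ↦ ⟨Rη,η⟩` on Λ²₋ is 2-nonnegative. -/
def NNICm (A : M6) : Prop := ∀ η ζ : L6, AntiSelfDual η → AntiSelfDual ζ →
  ip6 η η = 1 → ip6 ζ ζ = 1 → ip6 η ζ = 0 →
  0 ≤ ip6 (appM A η) η + ip6 (appM A ζ) ζ

/- ### complexifications -/

/-- `ℂ⁴` -/
abbrev VC4 := Fin 4 → ℂ
/-- `Λ²ℂ⁴` -/
abbrev LC6 := Fin 6 → ℂ

/-- the wedge product on ℂ⁴ -/
def wedgeC (x y : VC4) : LC6 := fun k => x (pr k).1 * y (pr k).2 - x (pr k).2 * y (pr k).1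

/-- the complex-bilinear extension of the inner product of ℝ⁴ -/
def bilC4 (x y : VC4) : ℂ := ∑ i, x i * y i

/-- the complex-bilinear extension of the inner product of Λ²ℝ⁴ -/
def bilC6 (a b : LC6) : ℂ := ∑ k, a k * b k

/-- the Hermitian inner product `⟨·,·⟩_h` on Λ²ℂ⁴ associated to the real inner
product on Λ²ℝ⁴ -/
def hermC6 (a b : LC6) : ℂ := ∑ k, a k * conj (b k)

/-- the complex-linear extension of an endomorphism of Λ²ℝ⁴ to Λ²ℂ⁴ -/
def appMC (A : M6) (w : LC6) : LC6 := fun k => ∑ l, (A k l : ℂ) * w l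

/-- the complex-linear extension of the Hodge star -/
def hodgeC (w : LC6) : LC6 := ![w 5, -(w 4), w 3, w 2, -(w 1), w 0]

/-- membership in `Λ²₊ ⊗ ℂ` -/
def SelfDualC (w : LC6) : Prop := hodgeC w = w



theorem aux_re (A : M6) (ω : LC6) :
    (hermC6 (appMC A ω) ω).re = ip6 (appM A (fun k => (ω k).re)) (fun k => (ω k).re)
      + ip6 (appM A (fun k => (ω k).im)) (fun k => (ω k).im) := by
  simp only [hermC6, appMC, ip6, appM, Complex.re_sum, ← Finset.sum_add_distrib]
  refine Finset.sum_congr rfl fun k _ => ?_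
  simp [Complex.mul_re, Complex.re_sum, Complex.im_sum]

theorem aux_im (A : M6) (hA : IsSymm6 A) (ω : LC6) :
    (hermC6 (appMC A ω) ω).im = 0 := by
  have h := hA (fun k => (ω k).im) (fun k => (ω k).re)
  have h2 : (hermC6 (appMC A ω) ω).im = ip6 (appM A (fun k => (ω k).im)) (fun k => (ω k).re)
      - ip6 (fun k => (ω k).im) (appM A (fun k => (ω k).re)) := by
    simp only [hermC6, appMC, ip6, appM, Complex.im_sum, ← Finset.sum_sub_distrib]
    refine Finset.sum_congr rfl fun k _ => ?_
    simp [Complex.mul_im, Complex.re_sum, Complex.im_sum]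
    ring
  rw [h2, h, sub_self]

theorem aux_smul (A : M6) (c : ℝ) (a : L6) :
    ip6 (appM A (c • a)) (c • a) = c ^ 2 * ip6 (appM A a) a := by
  simp only [ip6, appM, Finset.mul_sum, Finset.sum_mul, Pi.smul_apply, smul_eq_mul]
  refine Finset.sum_congr rfl fun k _ => Finset.sum_congr rfl fun l _ => ?_
  ring

theorem aux_ip (c : ℝ) (a b : L6) : ip6 (c • a) (c • b) = c ^ 2 * ip6 a b := by
  simp only [ip6, Finset.mul_sum, Pi.smul_apply, smul_eq_mul]
  refine Finset.sum_congr rfl fun k _ => ?_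
  ring

theorem aux_scale (A : M6) (P : L6 → Prop) (hP : ∀ (c : ℝ) a, P a → P (c • a))
    (H : ∀ η ζ : L6, P η → P ζ → ip6 η η = 1 → ip6 ζ ζ = 1 → ip6 η ζ = 0 →
      0 ≤ ip6 (appM A η) η + ip6 (appM A ζ) ζ)
    (a b : L6) (ha : P a) (hb : P b) (hab : ip6 a a = ip6 b b) (h0 : ip6 a b = 0) :
    0 ≤ ip6 (appM A a) a + ip6 (appM A b) b := by
  have hn : ∀ a : L6, 0 ≤ ip6 a a := fun a => Finset.sum_nonneg fun k _ => mul_self_nonneg _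
  have hz : ∀ a : L6, ip6 a a = 0 → a = 0 := by
    intro a h
    funext k
    have := (Finset.sum_eq_zero_iff_of_nonneg (fun k _ => mul_self_nonneg (a k))).1 h k
      (Finset.mem_univ _)
    simpa using this
  by_cases h : ip6 a a = 0
  · rw [hz a h, hz b (hab ▸ h)]
    simp [ip6]
  · have hpos : 0 < ip6 a a := lt_of_le_of_ne (hn a) (Ne.symm h)
    have hc : ((Real.sqrt (ip6 a a))⁻¹) ^ 2 = (ip6 a a)⁻¹ := by
      rw [inv_pow, Real.sq_sqrt hpos.le]
    have := H ((Real.sqrt (ip6 a a))⁻¹ • a) ((Real.sqrt (ip6 a a))⁻¹ • b) (hP _ _ ha) (hP _ _ hb)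
      (by rw [aux_ip, hc, inv_mul_cancel₀ h]) (by rw [aux_ip, hc, ← hab, inv_mul_cancel₀ h])
      (by rw [aux_ip, h0, mul_zero])
    rw [aux_smul, aux_smul, hc, ← mul_add] at this
    exact nonneg_of_mul_nonneg_right this (inv_pos.2 hpos)

theorem aux_bil (ω : LC6) (h : bilC6 ω ω = 0) :
    ip6 (fun k => (ω k).re) (fun k => (ω k).re) = ip6 (fun k => (ω k).im) (fun k => (ω k).im) ∧
    ip6 (fun k => (ω k).re) (fun k => (ω k).im) = 0 := by
  have h1 := congrArg Complex.re h
  have h2 := congrArg Complex.im h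
  simp only [bilC6, Fin.sum_univ_six, Complex.add_re, Complex.add_im, Complex.mul_re,
    Complex.mul_im, Complex.zero_re, Complex.zero_im] at h1 h2
  simp only [ip6, Fin.sum_univ_six]
  constructor <;> linarith

theorem aux_bil_conv (ω : LC6)
    (h1 : ip6 (fun k => (ω k).re) (fun k => (ω k).re)
      = ip6 (fun k => (ω k).im) (fun k => (ω k).im))
    (h2 : ip6 (fun k => (ω k).re) (fun k => (ω k).im) = 0) : bilC6 ω ω = 0 := by
  simp only [ip6, Fin.sum_univ_six] at h1 h2
  apply Complex.ext <;>
  simp only [bilC6, Fin.sum_univ_six, Complex.add_re, Complex.add_im, Complex.mul_re,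
    Complex.mul_im, Complex.zero_re, Complex.zero_im] <;> linarith

theorem aux_T (ω : LC6) (v w : VC4) (hω : ω = wedgeC v w)
    (hv : bilC4 v v = 0) (hw : bilC4 w w = 0) (hvw : bilC4 v w = 0) :
    bilC6 ω ω = 0 ∧ 
    ((ω 5 = ω 0 ∧ ω 4 = - ω 1 ∧ ω 3 = ω 2) ∨ (ω 5 = -ω 0 ∧ ω 4 = ω 1 ∧ ω 3 = -ω 2)) := by
  have e0 : ω 0 = v 0 * w 1 - v 1 * w 0 := by rw [hω]; rfl
  have e1 : ω 1 = v 0 * w 2 - v 2 * w 0 := by rw [hω]; rfl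
  have e2 : ω 2 = v 0 * w 3 - v 3 * w 0 := by rw [hω]; rfl
  have e3 : ω 3 = v 1 * w 2 - v 2 * w 1 := by rw [hω]; rfl
  have e4 : ω 4 = v 1 * w 3 - v 3 * w 1 := by rw [hω]; rfl
  have e5 : ω 5 = v 2 * w 3 - v 3 * w 2 := by rw [hω]; rfl
  simp only [bilC4, Fin.sum_univ_four] at hv hw hvw
  have T : ∀ i j, ∑ k, (v i * w k - v k * w i) * (v j * w k - v k * w j) = 0 := by
    intro i j
    simp only [Fin.sum_univ_four]
    linear_combination (v i * v j) * hw + (w i * w j) * hv - (v i * w j + v j * w i) * hvw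
  simp only [Fin.sum_univ_four] at T
  refine ⟨?_, ?_⟩
  · simp only [bilC6, Fin.sum_univ_six, e0, e1, e2, e3, e4, e5]
    linear_combination (T 0 0 + T 1 1 + T 2 2 + T 3 3) / 2
  have m00 : (ω 5 + ω 0) * (ω 5 - ω 0) = 0 := by
    rw [e0, e5]; linear_combination (T 2 2 + T 3 3 - T 0 0 - T 1 1) / 2
  have m11 : (ω 4 - ω 1) * (ω 4 + ω 1) = 0 := by
    rw [e4, e1]; linear_combination (T 1 1 + T 3 3 - T 0 0 - T 2 2) / 2
  have m22 : (ω 3 + ω 2) * (ω 3 - ω 2) = 0 := by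
    rw [e3, e2]; linear_combination (T 1 1 + T 2 2 - T 0 0 - T 3 3) / 2
  have t01 := T 0 1
  have t02 := T 0 2
  have t03 := T 0 3
  have t12 := T 1 2
  have t13 := T 1 3
  have t23 := T 2 3
  have m01 : (ω 5 + ω 0) * (ω 4 + ω 1) = 0 := by
    rw [e0, e5, e1, e4]; linear_combination t12 - t03
  have m10 : (ω 4 - ω 1) * (ω 5 - ω 0) = 0 := by
    rw [e0, e5, e1, e4]; linear_combination t12 + t03
  have m02 : (ω 5 + ω 0) * (ω 3 - ω 2) = 0 := by
    rw [e0, e5, e2, e3]; linear_combination -t02 - t13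
  have m20 : (ω 3 + ω 2) * (ω 5 - ω 0) = 0 := by
    rw [e0, e5, e2, e3]; linear_combination t02 - t13
  have m12 : (ω 4 - ω 1) * (ω 3 - ω 2) = 0 := by
    rw [e1, e4, e2, e3]; linear_combination t23 - t01
  have m21 : (ω 3 + ω 2) * (ω 4 + ω 1) = 0 := by
    rw [e1, e4, e2, e3]; linear_combination t01 + t23
  clear T t01 t02 t03 t12 t13 t23 e0 e1 e2 e3 e4 e5 hv hw hvw hω
  by_cases h : ω 5 - ω 0 = 0 ∧ ω 4 + ω 1 = 0 ∧ ω 3 - ω 2 = 0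
  · left
    exact ⟨sub_eq_zero.1 h.1, eq_neg_of_add_eq_zero_left h.2.1, sub_eq_zero.1 h.2.2⟩
  · right
    suffices ω 5 + ω 0 = 0 ∧ ω 4 - ω 1 = 0 ∧ ω 3 + ω 2 = 0 from
      ⟨eq_neg_of_add_eq_zero_left this.1, sub_eq_zero.1 this.2.1,
        eq_neg_of_add_eq_zero_left this.2.2⟩
    simp only [mul_eq_zero] at *
    tauto

theorem aux_sd (w : L6) : SelfDual w ↔ (w 5 = w 0 ∧ w 4 = -w 1 ∧ w 3 = w 2) := by
  constructor
  · intro h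
    have h0 := congrFun h 0
    have h1 := congrFun h 1
    have h2 := congrFun h 2
    simp [hodge] at h0 h1 h2
    exact ⟨h0, by linarith, h2⟩
  · rintro ⟨h0, h1, h2⟩
    funext k
    fin_cases k <;> simp [hodge, h0, h1, h2]

theorem aux_asd (w : L6) : AntiSelfDual w ↔ (w 5 = -w 0 ∧ w 4 = w 1 ∧ w 3 = -w 2) := by
  constructor
  · intro h
    have h0 := congrFun h 0
    have h1 := congrFun h 1
    have h2 := congrFun h 2
    simp [hodge] at h0 h1 h2
    exact ⟨h0, by linarith, h2⟩
  · rintro ⟨h0, h1, h2⟩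
    funext k
    fin_cases k <;> simp [hodge, h0, h1, h2]

theorem aux_hsmul (A : M6) (c : ℂ) (ω : LC6) :
    hermC6 (appMC A (c • ω)) (c • ω) = ((Complex.normSq c : ℝ) : ℂ) * hermC6 (appMC A ω) ω := by
  rw [Complex.normSq_eq_conj_mul_self]
  simp only [hermC6, appMC, Finset.mul_sum, Finset.sum_mul, Pi.smul_apply, smul_eq_mul, map_mul]
  refine Finset.sum_congr rfl fun k _ => Finset.sum_congr rfl fun l _ => ?_
  ring

open scoped ComplexOrder in
theorem aux_rev (A : M6)
    (H : ∀ v w : VC4, bilC4 v v = 0 → bilC4 w w = 0 → bilC4 v w = 0 →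
      wedgeC v w ≠ 0 →
      0 ≤ hermC6 (appMC A (wedgeC v w)) (wedgeC v w))
    (ω : LC6) (s : ℂ) (hs : s * s = 1) (h5 : ω 5 = s * ω 0) (h4 : ω 4 = -(s * ω 1))
    (h3 : ω 3 = s * ω 2) (hb : bilC6 ω ω = 0) :
    0 ≤ (hermC6 (appMC A ω) ω).re := by
  have key : ∀ (c : ℂ) (v w : VC4), c ≠ 0 → bilC4 v v = 0 → bilC4 w w = 0 → bilC4 v w = 0 →
      wedgeC v w = c • ω → 0 ≤ (hermC6 (appMC A ω) ω).re := by
    intro c v w hc hv hw hvw e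
    by_cases hz : ω = 0
    · rw [hz]; simp [hermC6]
    have := H v w hv hw hvw (by rw [e]; exact smul_ne_zero hc hz)
    rw [e, aux_hsmul] at this
    have h2 := (Complex.le_def.1 this).1
    rw [Complex.re_ofReal_mul] at h2
    exact nonneg_of_mul_nonneg_right h2 (Complex.normSq_pos.2 hc)
  have hq : ω 0 * ω 0 + ω 1 * ω 1 + ω 2 * ω 2 = 0 := by
    simp only [bilC6, Fin.sum_univ_six, h5, h4, h3] at hb
    linear_combination hb / 2 - (ω 0 * ω 0 + ω 1 * ω 1 + ω 2 * ω 2) / 2 * hs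
  by_cases c0 : ω 0 = 0
  · by_cases c1 : ω 1 = 0
    · by_cases c2 : ω 2 = 0
      · have : ω = 0 := by
          funext k
          fin_cases k <;> simp [h5, h4, h3, c0, c1, c2]
        rw [this]; simp [hermC6]
      · refine key (ω 2) ![0, ω 0, ω 1, ω 2] ![-ω 2, s * ω 1, -(s * ω 0), 0] c2 ?_ ?_ ?_ ?_
        · simp [bilC4, Fin.sum_univ_four]; linear_combination hq
        · simp [bilC4, Fin.sum_univ_four]
          linear_combination hq + (ω 0 * ω 0 + ω 1 * ω 1) * hs
        · simp [bilC4, Fin.sum_univ_four]; ring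
        · funext k
          fin_cases k <;> simp [wedgeC, pr, h5, h4, h3] <;> first | ring1 | linear_combination (-s) * hq | linear_combination s * hq
    · refine key (ω 1) ![0, ω 0, ω 1, ω 2] ![-ω 1, -(s * ω 2), 0, s * ω 0] c1 ?_ ?_ ?_ ?_
      · simp [bilC4, Fin.sum_univ_four]; linear_combination hq
      · simp [bilC4, Fin.sum_univ_four]
        linear_combination hq + (ω 0 * ω 0 + ω 2 * ω 2) * hs
      · simp [bilC4, Fin.sum_univ_four]; ring
      · funext k
        fin_cases k <;> simp [wedgeC, pr, h5, h4, h3] <;> first | ring1 | linear_combination (-s) * hq | linear_combination s * hq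
  · refine key (ω 0) ![0, ω 0, ω 1, ω 2] ![-ω 0, 0, s * ω 2, -(s * ω 1)] c0 ?_ ?_ ?_ ?_
    · simp [bilC4, Fin.sum_univ_four]; linear_combination hq
    · simp [bilC4, Fin.sum_univ_four]
      linear_combination hq + (ω 1 * ω 1 + ω 2 * ω 2) * hs
    · simp [bilC4, Fin.sum_univ_four]; ring
    · funext k
      fin_cases k <;> simp [wedgeC, pr, h5, h4, h3] <;> first | ring1 | linear_combination (-s) * hq | linear_combination s * hq

open scoped ComplexOrder in
/-- an algebraic curvature operator is both NNIC₊ and NNIC₋ iff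
it has nonnegative isotropic curvature. -/
theorem nnicPlus_and_nnicMinus_iff_nonneg_isotropic (A : M6) (hA : IsCurvOp A) :
    (NNICp A ∧ NNICm A) ↔
    (∀ v w : VC4, bilC4 v v = 0 → bilC4 w w = 0 → bilC4 v w = 0 →
      wedgeC v w ≠ 0 →
      0 ≤ hermC6 (appMC A (wedgeC v w)) (wedgeC v w)) := by
  constructor
  · rintro ⟨hp, hm⟩ v w hv hw hvw -
    generalize hω : wedgeC v w = ω
    obtain ⟨hb, hd⟩ := aux_T ω v w hω.symm hv hw hvw
    obtain ⟨b1, b2⟩ := aux_bil ω hb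
    rw [Complex.le_def]
    refine ⟨?_, (aux_im A hA.1 ω).symm⟩
    rw [aux_re, Complex.zero_re]
    rcases hd with ⟨d5, d4, d3⟩ | ⟨d5, d4, d3⟩
    · refine aux_scale A SelfDual ?_ (fun η ζ h1 h2 => hp η ζ h1 h2) _ _ ?_ ?_ b1 b2
      · intro c a h
        rw [aux_sd] at h ⊢
        simp [h.1, h.2.1, h.2.2]
      · rw [aux_sd]; simp [d5, d4, d3]
      · rw [aux_sd]; simp [d5, d4, d3]
    · refine aux_scale A AntiSelfDual ?_ (fun η ζ h1 h2 => hm η ζ h1 h2) _ _ ?_ ?_ b1 b2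
      · intro c a h
        rw [aux_asd] at h ⊢
        simp [h.1, h.2.1, h.2.2]
      · rw [aux_asd]; simp [d5, d4, d3]
      · rw [aux_asd]; simp [d5, d4, d3]
  · intro H
    constructor
    · intro η ζ h1 h2 n1 n2 n3
      rw [aux_sd] at h1 h2
      have hb := aux_bil_conv (fun k => (⟨η k, ζ k⟩ : ℂ)) (n1.trans n2.symm) n3
      have := aux_rev A H (fun k => (⟨η k, ζ k⟩ : ℂ)) 1 (by norm_num)
        (by apply Complex.ext <;> simp [h1, h2]) (by apply Complex.ext <;> simp [h1, h2])
        (by apply Complex.ext <;> simp [h1, h2]) hb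
      rw [aux_re] at this
      exact this
    · intro η ζ h1 h2 n1 n2 n3
      rw [aux_asd] at h1 h2
      have hb := aux_bil_conv (fun k => (⟨η k, ζ k⟩ : ℂ)) (n1.trans n2.symm) n3
      have := aux_rev A H (fun k => (⟨η k, ζ k⟩ : ℂ)) (-1) (by norm_num)
        (by apply Complex.ext <;> simp [h1, h2]) (by apply Complex.ext <;> simp [h1, h2])
        (by apply Complex.ext <;> simp [h1, h2]) hb
      rw [aux_re] at this
      exact this
end
end

section
/- In S²_BΛ²ℝ⁴ one has Q(Id) = 3·Id, and if R ∈ S²_BΛ²ℝ⁴ is Einstein with ρ(R) = 3·id_{ℝ⁴} (so scal(R) = 12), then for every κ ∈ ℝ, Q(R − κ·Id) = Q(R) − 6κ·Id + 3κ²·Id. -/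
noncomputable section

open scoped ComplexConjugate

/- ### the quadratic quantity Q(R) = R² + R^# and related notions -/

/-- product of endomorphisms of Λ²ℝ⁴ (matrix product) -/
def mm (A B : M6) : M6 := fun k l => ∑ j, A k j * B j l

/-- the antisymmetric array of coefficients of a 2-form: `ext2 w a b = w_{ab}` -/
def ext2 (w : L6) (a b : Fin 4) : ℝ :=
  ∑ k, w k * ((if (pr k).1 = a ∧ (pr k).2 = b then (1:ℝ) else 0)
    - (if (pr k).1 = b ∧ (pr k).2 = a then (1:ℝ) else 0))

/-- the skew-symmetric matrix `φ(w)` associated to a 2-form `w` under the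
identification `x∧y ↦ (u ↦ ⟨x,u⟩y − ⟨y,u⟩x)` of `Λ²ℝ⁴` with `𝔰𝔬(4)` -/
def toSkew (w : L6) : Fin 4 → Fin 4 → ℝ := fun a b => ext2 w b a

/-- the Lie bracket on Λ²ℝ⁴ obtained by transporting the commutator of
matrices through the identification `Λ²ℝ⁴ ≃ 𝔰𝔬(4)` above -/
def bracket (u v : L6) : L6 :=
  fun k => ∑ c, (toSkew u (pr k).2 c * toSkew v c (pr k).1
    - toSkew v (pr k).2 c * toSkew u c (pr k).1)

/-- the standard (orthonormal) basis of Λ²ℝ⁴ -/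
def std6 (k : Fin 6) : L6 := fun l => if l = k then 1 else 0

/-- the quadratic form of `R^#` :
`η ↦ −(1/2) Σᵢ ⟨[η, R([η, Rωᵢ])], ωᵢ⟩` for the orthonormal basis `(ωᵢ)` of Λ²ℝ⁴. -/
def sharpQ (A : M6) (η : L6) : ℝ :=
  -(1/2 : ℝ) * ∑ i, ip6 (bracket η (appM A (bracket η (appM A (std6 i))))) (std6 i)

/-- `R^#`, the symmetric endomorphism of Λ²ℝ⁴ determined by
`⟨R^#η, η⟩ = sharpQ R η` (obtained by polarization). -/
def sharp (A : M6) : M6 :=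
  fun k l => (sharpQ A (std6 k + std6 l) - sharpQ A (std6 k) - sharpQ A (std6 l)) / 2

/-- `Q(R) = R² + R^#` -/
def Qop (A : M6) : M6 := mm A A + sharp A

/-- the identity endomorphism of Λ²ℝ⁴ -/
def idM6 : M6 := fun k l => if k = l then 1 else 0

/-- the Ricci endomorphism `ρ(R)` of a curvature operator, as a matrix:
`⟨ρ(R)x, y⟩ = Σᵢ ⟨R(x∧eᵢ), y∧eᵢ⟩`. -/
def ricci (A : M6) : Fin 4 → Fin 4 → ℝ :=
  fun a b => ∑ i, ip6 (appM A (wedge (std4 a) (std4 i))) (wedge (std4 b) (std4 i))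

/-- An oriented curvature cone: a closed convex cone in `S²_BΛ²ℝ⁴` which is
invariant under the `SO(4)`-action `⟨(g·R)(x∧y), z∧t⟩ = ⟨R(gx∧gy), gz∧gt⟩`
(expressed below by the characterizing property of `B = g·A`) and contains
the identity in its interior relative to `S²_BΛ²ℝ⁴`. -/
structure OrientedCurvatureCone where
  /-- the underlying set of algebraic curvature operators -/
  carrier : Set M6
  subset_curvOp : ∀ A ∈ carrier, IsCurvOp A
  closed : IsClosed carrier
  convex : Convex ℝ carrier
  cone : ∀ (t : ℝ), 0 ≤ t → ∀ A ∈ carrier, t • A ∈ carrier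
  so4_invariant : ∀ (g : Matrix (Fin 4) (Fin 4) ℝ),
    (∀ x y : V4, ip4 (g.mulVec x) (g.mulVec y) = ip4 x y) → g.det = 1 →
    ∀ A ∈ carrier, ∀ B : M6,
      (∀ x y z t : V4, ip6 (appM B (wedge x y)) (wedge z t)
        = ip6 (appM A (wedge (g.mulVec x) (g.mulVec y)))
            (wedge (g.mulVec z) (g.mulVec t))) →
      B ∈ carrier
  id_mem_interior : ∃ ε : ℝ, 0 < ε ∧
    ∀ A : M6, IsCurvOp A → dist A idM6 < ε → A ∈ carrier


theorem br_formula (u v : L6) : bracket u v =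
    ![u 1 * v 3 - u 3 * v 1 + u 2 * v 4 - u 4 * v 2,
      u 3 * v 0 - u 0 * v 3 + u 2 * v 5 - u 5 * v 2,
      u 4 * v 0 - u 0 * v 4 + u 5 * v 1 - u 1 * v 5,
      u 0 * v 1 - u 1 * v 0 + u 4 * v 5 - u 5 * v 4,
      u 0 * v 2 - u 2 * v 0 + u 5 * v 3 - u 3 * v 5,
      u 1 * v 2 - u 2 * v 1 + u 3 * v 4 - u 4 * v 3] := by
  funext k
  fin_cases k <;>
  · simp [bracket, toSkew, ext2, pr, Fin.sum_univ_succ]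
    try ring

theorem br_add (η u v : L6) : bracket η (u + v) = bracket η u + bracket η v := by
  rw [br_formula, br_formula, br_formula]
  funext k
  fin_cases k <;>
  · simp
    try ring

theorem br_smul (η u : L6) (c : ℝ) : bracket η (c • u) = c • bracket η u := by
  rw [br_formula, br_formula]
  funext k
  fin_cases k <;>
  · simp
    try ring

theorem app_shift (A : M6) (κ : ℝ) (w : L6) :
    appM (A - κ • idM6) w = appM A w + (-κ) • w := by
  funext k
  simp only [appM, idM6, Pi.sub_apply, Pi.smul_apply, Pi.add_apply, smul_eq_mul, sub_mul,
    Finset.sum_sub_distrib, mul_ite, ite_mul, mul_one, mul_zero, zero_mul, Finset.sum_ite_eq,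
    Finset.mem_univ, if_true]
  ring

theorem app_add (A : M6) (u v : L6) : appM A (u + v) = appM A u + appM A v := by
  funext k
  simp [appM, mul_add, Finset.sum_add_distrib]

theorem app_smul (A : M6) (u : L6) (c : ℝ) : appM A (c • u) = c • appM A u := by
  funext k
  simp only [appM, Pi.smul_apply, smul_eq_mul, Finset.mul_sum]
  exact Finset.sum_congr rfl fun _ _ => by ring

theorem ip_add (a b c : L6) : ip6 (a + b) c = ip6 a c + ip6 b c := by
  simp [ip6, add_mul, Finset.sum_add_distrib]

theorem ip_smul (a c : L6) (r : ℝ) : ip6 (r • a) c = r * ip6 a c := by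
  simp only [ip6, Pi.smul_apply, smul_eq_mul, Finset.mul_sum]
  exact Finset.sum_congr rfl fun _ _ => by ring

theorem ip_std (a : L6) (i : Fin 6) : ip6 a (std6 i) = a i := by
  simp [ip6, std6]

theorem app_std (A : M6) (i : Fin 6) : appM A (std6 i) = fun k => A k i := by
  funext k
  simp [appM, std6]

theorem killing (η : L6) :
    ∑ i, ip6 (bracket η (bracket η (std6 i))) (std6 i) = -4 * ip6 η η := by
  simp only [ip_std, br_formula]
  simp [Fin.sum_univ_succ, std6, ip6]
  ring

theorem sharpQ_shift (A : M6) (κ : ℝ) (η : L6) :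
    sharpQ (A - κ • idM6) η = sharpQ A η
      + κ / 2 * (∑ i, ip6 (bracket η (bracket η (appM A (std6 i)))) (std6 i)
        + ∑ i, ip6 (bracket η (appM A (bracket η (std6 i)))) (std6 i))
      + 2 * κ ^ 2 * ip6 η η := by
  have hk := killing η
  simp only [sharpQ, app_shift, br_add, br_smul, app_add, app_smul, ip_add, ip_smul,
    Finset.sum_add_distrib, ← Finset.mul_sum, smul_add]
  rw [hk]
  ring

theorem symm_entry {A : M6} (h : IsSymm6 A) (i j : Fin 6) : A j i = A i j := by
  have := h (std6 i) (std6 j)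
  rw [ip_std, app_std, app_std] at this
  simpa [ip6, std6] using this

theorem bianchi_entry {A : M6} (h : Bianchi A) : A 5 0 - A 4 1 + A 2 3 = 0 := by
  have := h (std4 0) (std4 1) (std4 2) (std4 3)
  simp [ip6, appM, wedge, std4, pr, Fin.sum_univ_succ] at this
  linarith

set_option maxHeartbeats 2000000 in
theorem cross (A : M6) (hA : IsCurvOp A)
    (hEin : ∀ a b : Fin 4, ricci A a b = if a = b then 3 else 0) (η : L6) :
    ∑ i, ip6 (bracket η (bracket η (appM A (std6 i)))) (std6 i)
        + ∑ i, ip6 (bracket η (appM A (bracket η (std6 i)))) (std6 i)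
      = 4 * ip6 (appM A η) η - 12 * ip6 η η := by
  have hs := symm_entry hA.1
  have hb := bianchi_entry hA.2
  have r00 := hEin 0 0
  have r11 := hEin 1 1
  have r22 := hEin 2 2
  have r33 := hEin 3 3
  have r01 := hEin 0 1
  have r02 := hEin 0 2
  have r03 := hEin 0 3
  have r12 := hEin 1 2
  have r13 := hEin 1 3
  have r23 := hEin 2 3
  simp [ricci, ip6, appM, wedge, std4, pr, Fin.sum_univ_succ] at r00 r11 r22 r33 r01 r02 r03 r12 r13 r23
  simp only [ip_std, br_formula, app_std]
  simp [Fin.sum_univ_succ, std6, ip6, appM]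
  rw [hs 0 1, hs 0 2, hs 0 3, hs 0 4, hs 0 5, hs 1 2, hs 1 3, hs 1 4, hs 1 5,
    hs 2 3, hs 2 4, hs 2 5, hs 3 4, hs 3 5, hs 4 5]
  simp only [hs 0 1, hs 0 2, hs 0 3, hs 0 4, hs 0 5, hs 1 2, hs 1 3, hs 1 4, hs 1 5,
    hs 2 3, hs 2 4, hs 2 5, hs 3 4, hs 3 5, hs 4 5] at *
  have e24 : A 2 4 = -A 1 3 := by linarith
  have e25 : A 2 5 = A 0 3 := by linarith
  have e15 : A 1 5 = -A 0 4 := by linarith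
  have e45 : A 4 5 = -A 0 1 := by linarith
  have e35 : A 3 5 = A 0 2 := by linarith
  have e34 : A 3 4 = -A 1 2 := by linarith
  have e55 : A 5 5 = A 0 0 := by linarith
  have e44 : A 4 4 = A 1 1 := by linarith
  have e33 : A 3 3 = 3 - A 0 0 - A 1 1 := by linarith
  have e22 : A 2 2 = 3 - A 0 0 - A 1 1 := by linarith
  have e14 : A 1 4 = A 0 5 + A 2 3 := by linarith
  rw [e24, e25, e15, e45, e35, e34, e55, e44, e33, e22, e14]
  ring

theorem ip_pol (k l : Fin 6) : ip6 (std6 k + std6 l) (std6 k + std6 l)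
    = ip6 (std6 k) (std6 k) + ip6 (std6 l) (std6 l) + 2 * idM6 k l := by
  have h : ip6 (std6 k + std6 l) (std6 k + std6 l)
      = ip6 (std6 k) (std6 k) + ip6 (std6 l) (std6 l) + 2 * ip6 (std6 k) (std6 l) := by
    simp only [ip6, Pi.add_apply, Finset.mul_sum, ← Finset.sum_add_distrib]
    exact Finset.sum_congr rfl fun _ _ => by ring
  rw [h, ip_std (std6 k) l]
  simp [std6, idM6, eq_comm]

theorem ipA_pol (A : M6) (hs : IsSymm6 A) (k l : Fin 6) :
    ip6 (appM A (std6 k + std6 l)) (std6 k + std6 l)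
    = ip6 (appM A (std6 k)) (std6 k) + ip6 (appM A (std6 l)) (std6 l) + 2 * A k l := by
  have h : ∀ a b c : L6, ip6 a (b + c) = ip6 a b + ip6 a c := by
    intro a b c
    simp [ip6, mul_add, Finset.sum_add_distrib]
  rw [app_add, ip_add, h, h]
  simp only [ip_std, app_std]
  rw [symm_entry hs k l]
  ring

theorem mm_shift (A : M6) (κ : ℝ) (k l : Fin 6) : mm (A - κ • idM6) (A - κ • idM6) k l
    = mm A A k l - 2 * κ * A k l + κ ^ 2 * idM6 k l := by
  have h : mm (A - κ • idM6) (A - κ • idM6) k l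
      = mm A A k l - κ * ∑ j, A k j * idM6 j l - κ * ∑ j, idM6 k j * A j l
        + κ ^ 2 * ∑ j, idM6 k j * idM6 j l := by
    simp only [mm, Finset.mul_sum, ← Finset.sum_add_distrib, ← Finset.sum_sub_distrib]
    exact Finset.sum_congr rfl fun _ _ => by
      simp only [Pi.sub_apply, Pi.smul_apply, smul_eq_mul]
      ring
  rw [h]
  have h1 : ∑ j, A k j * idM6 j l = A k l := by simp [idM6]
  have h2 : ∑ j, idM6 k j * A j l = A k l := by simp [idM6]
  have h3 : ∑ j, idM6 k j * idM6 j l = idM6 k l := by simp [idM6]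
  rw [h1, h2, h3]
  ring

theorem app_id (w : L6) : appM idM6 w = w := by
  funext k
  simp [appM, idM6]

theorem sharpQ_id (η : L6) : sharpQ idM6 η = 2 * ip6 η η := by
  simp only [sharpQ, app_id, killing]
  ring

/-- `Q(Id) = 3·Id`, and for an Einstein curvature operator with
`ρ(R) = 3·id` one has `Q(R − κ·Id) = Q(R) − 6κ·Id + 3κ²·Id`. -/
theorem Qop_id_and_Qop_einstein_shift (A : M6) (hA : IsCurvOp A)
    (hEin : ∀ a b : Fin 4, ricci A a b = if a = b then 3 else 0) :
    Qop idM6 = (3 : ℝ) • idM6 ∧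
    ∀ κ : ℝ, Qop (A - κ • idM6)
      = Qop A - (6 * κ) • idM6 + (3 * κ ^ 2) • idM6 := by
  constructor
  · funext k l
    have h3 : mm idM6 idM6 k l = idM6 k l := by simp [mm, idM6]
    simp only [Qop, Pi.add_apply, Pi.smul_apply, smul_eq_mul, sharp, sharpQ_id, ip_pol, h3]
    ring
  · intro κ
    funext k l
    simp only [Qop, Pi.add_apply, Pi.sub_apply, Pi.smul_apply, smul_eq_mul, sharp,
      sharpQ_shift, cross A hA hEin, ip_pol, ipA_pol A hA.1, mm_shift]
    ring
end
end
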